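/- arXiv:cs/0605008 — 3 statements merged into one kernel-verified Lean document; each statement's English description precedes it below -/
import Mathlib

section
/- Let E and F be finite sets, let k ≥ 1, and let g = (g_1,…,g_k) be a k-tuple of functions from E to F. Then the set of minimal samples of g over E (i.e., the set of pairs (P,(c_i)_{i∈P}) with P ⊆ {1,…,k} and c_i ∈ F for i ∈ P that are minimal samples of g over E) is finite and has cardinality at most k!. -/
/-- A minimal sample is represented by a function `s : Fin k → Option F`,
with `s i = some cᵢ` when `i ∈ P` and `s i = none` (the symbol `-`) otherwise.
`s` is a sample of `g` over `E` if every element of `E` is covered,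
i.e. `E = ⋃_{i ∈ P} g_i⁻¹(c_i)`. -/
def IsSampleOpt {E F : Type*} {k : ℕ} (g : Fin k → E → F)
    (s : Fin k → Option F) : Prop :=
  ∀ e : E, ∃ i : Fin k, s i = some (g i e)

/-- A sample is minimal if dropping any index `j` of its support breaks the covering. -/
def IsMinimalSampleOpt {E F : Type*} {k : ℕ} (g : Fin k → E → F)
    (s : Fin k → Option F) : Prop :=
  IsSampleOpt g s ∧ ∀ j : Fin k, s j ≠ none → ∃ e : E, ∀ i : Fin k, i ≠ j → s i ≠ some (g i e)

/-- A minimal sample extending a sample is equal to it. -/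
theorem IsMinimalSampleOpt.eq_of_extends {E F : Type*} {k : ℕ} {g : Fin k → E → F}
    {s t : Fin k → Option F} (hs : IsMinimalSampleOpt g s) (ht : IsSampleOpt g t)
    (hts : ∀ i, t i ≠ none → s i = t i) : s = t := by
  funext j
  by_cases htj : t j = none
  · rw [htj]
    by_contra hsj
    obtain ⟨e, he⟩ := hs.2 j hsj
    obtain ⟨i, hi⟩ := ht e
    have hij : i ≠ j := by
      rintro rfl
      simp [htj] at hi
    exact he i hij ((hts i (by simp [hi])).trans hi)
  · exact hts j htj

/-- At most `m!` minimal samples extend a partial assignment with `m` unassigned indices. -/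
theorem ncard_isMinimalSampleOpt_extends_le {E F : Type*} [Fintype F] {k : ℕ}
    (g : Fin k → E → F) (m : ℕ) (t : Fin k → Option F)
    (hm : {i | t i = none}.ncard = m) :
    {s | IsMinimalSampleOpt g s ∧ ∀ i, t i ≠ none → s i = t i}.ncard ≤ m.factorial := by
  classical
  induction m using Nat.strong_induction_on generalizing t with
  | _ m ih =>
  by_cases ht : IsSampleOpt g t
  · calc
      _ ≤ ({t} : Set (Fin k → Option F)).ncard :=
        Set.ncard_le_ncard fun s hs => hs.1.eq_of_extends ht hs.2
      _ = 1 := Set.ncard_singleton t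
      _ ≤ m.factorial := m.factorial_pos
  · simp only [IsSampleOpt, not_forall, not_exists] at ht
    obtain ⟨e, he⟩ := ht
    let N : Finset (Fin k) := {i | t i = none}
    have hN : N.card = m := by
      rw [← hm, ← Set.ncard_coe_finset]
      simp [N]
    let S : Fin k → Set (Fin k → Option F) := fun j =>
      {s | IsMinimalSampleOpt g s ∧ ∀ i, Function.update t j (some (g j e)) i ≠ none →
        s i = Function.update t j (some (g j e)) i}
    have hcover : {s | IsMinimalSampleOpt g s ∧ ∀ i, t i ≠ none → s i = t i} ⊆
        ⋃ j ∈ N, S j := by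
      rintro s ⟨hs, hts⟩
      obtain ⟨j, hj⟩ := hs.1 e
      have htj : t j = none := by
        by_contra h
        exact he j ((hts j h).symm.trans hj)
      refine Set.mem_biUnion (show j ∈ N by simpa [N] using htj) ⟨hs, fun i hi => ?_⟩
      by_cases hij : i = j
      · subst hij
        simpa using hj
      · rw [Function.update_of_ne hij] at hi ⊢
        exact hts i hi
    have hbound : ∀ j ∈ N, (S j).ncard ≤ (m - 1).factorial := by
      intro j hj
      have hpos : 0 < m := hN ▸ Finset.card_pos.mpr ⟨j, hj⟩
      refine ih (m - 1) (by omega) _ ?_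
      have herase : {i | Function.update t j (some (g j e)) i = none} = ↑(N.erase j) := by
        ext i
        by_cases hij : i = j
        · subst hij
          simp
        · simp [N, hij]
      rw [herase, Set.ncard_coe_finset, Finset.card_erase_of_mem hj, hN]
    calc
      _ ≤ (⋃ j ∈ N, S j).ncard := Set.ncard_le_ncard hcover
      _ ≤ ∑ j ∈ N, (S j).ncard := N.set_ncard_biUnion_le S
      _ ≤ N.card • (m - 1).factorial := Finset.sum_le_card_nsmul N _ _ hbound
      _ = m * (m - 1).factorial := by rw [hN, smul_eq_mul]
      _ ≤ m.factorial := by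
        rcases m with _ | m
        · simp
        · simp [Nat.factorial_succ]

theorem stmt_3 {E F : Type*} [Fintype E] [Fintype F] {k : ℕ} (hk : 1 ≤ k)
    (g : Fin k → E → F) :
    {s : Fin k → Option F | IsMinimalSampleOpt g s}.Finite ∧
      {s : Fin k → Option F | IsMinimalSampleOpt g s}.ncard ≤ Nat.factorial k := by
  refine ⟨Set.toFinite _, ?_⟩
  simpa using ncard_isMinimalSampleOpt_extends_le g k (fun _ => none) (by simp)
end

section
/- Let D be a finite set, let k ≥ 1, and let f_1,…,f_k and g_1,…,g_k be functions from D to D. Then the statement 'for all x, y ∈ D there exists an index i ∈ {1,…,k} with f_i(x) = g_i(y)' holds if and only if for every x ∈ D there exists a minimal sample (P,(c_i)_{i∈P}) of (g_1,…,g_k) over D such that f_i(x) = c_i for every i ∈ P. -/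
/-- `(P, c)` is a sample of the `k`-tuple of functions `g` over `D`:
`D = ⋃_{i ∈ P} g_i⁻¹(c_i)`, i.e. every element of `D` is covered. -/
def IsSample {D F : Type*} {k : ℕ} (g : Fin k → D → F)
    (P : Finset (Fin k)) (c : Fin k → F) : Prop :=
  ∀ y : D, ∃ i ∈ P, g i y = c i

/-- A sample is minimal if dropping any index `j ∈ P` breaks the covering. -/
def IsMinimalSample {D F : Type*} {k : ℕ} (g : Fin k → D → F)
    (P : Finset (Fin k)) (c : Fin k → F) : Prop :=
  IsSample g P c ∧ ∀ j ∈ P, ∃ y : D, ∀ i ∈ P.erase j, g i y ≠ c i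

/-- Every sample contains a minimal one with the same values. -/
theorem IsSample.exists_isMinimalSample {D F : Type*} {k : ℕ} {g : Fin k → D → F}
    {P : Finset (Fin k)} {c : Fin k → F} (h : IsSample g P c) :
    ∃ Q ⊆ P, IsMinimalSample g Q c := by
  obtain ⟨Q, hQP, hQ⟩ := exists_minimal_le_of_wellFoundedLT (IsSample g · c) P h
  refine ⟨Q, hQP, hQ.prop, fun j hj => ?_⟩
  have hnot := hQ.not_prop_of_lt (Finset.erase_ssubset hj)
  simpa only [IsSample, not_forall, not_exists, not_and] using hnot

theorem stmt_5 {D : Type*} [Fintype D] {k : ℕ} (hk : 1 ≤ k)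
    (f g : Fin k → D → D) :
    (∀ x y : D, ∃ i : Fin k, f i x = g i y) ↔
      ∀ x : D, ∃ (P : Finset (Fin k)) (c : Fin k → D),
        IsMinimalSample g P c ∧ ∀ i ∈ P, f i x = c i := by
  constructor
  · intro h x
    have hs : IsSample g Finset.univ (f · x) := fun y =>
      let ⟨i, hi⟩ := h x y
      ⟨i, Finset.mem_univ i, hi.symm⟩
    obtain ⟨Q, -, hQ⟩ := hs.exists_isMinimalSample
    exact ⟨Q, _, hQ, fun _ _ => rfl⟩
  · intro h x y
    obtain ⟨P, c, hP, hc⟩ := h x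
    obtain ⟨i, hi, hy⟩ := hP.1 y
    exact ⟨i, (hc i hi).trans hy.symm⟩
end

section
/- Let S, F and B be finite sets, let k, l ≥ 1, let b ∈ B, let u_1,…,u_l : B → F and v_1,…,v_l : S → F, let g_1,…,g_k : S → F, and let w_1,…,w_k ∈ F. Let S_b = {z ∈ S : v_j(z) = u_j(b) for all j ∈ {1,…,l}}. Then the following are equivalent: (1) for every z ∈ S, if v_j(z) = u_j(b) for all j ∈ {1,…,l}, then there exists i ∈ {1,…,k} with g_i(z) = w_i; (2) there exists a minimal sample (P,(c_i)_{i∈P}) of (g_1,…,g_k) (restricted to S_b) over S_b such that w_i = c_i for every i ∈ P. -/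
/-- `(P, c)` is a sample of the `k`-tuple of functions `g` over the subset `A`:
`A = ⋃_{i ∈ P} (g_i⁻¹(c_i) ∩ A)`, i.e. every element of `A` is covered. -/
def IsSampleOn {S F : Type*} {k : ℕ} (A : Set S) (g : Fin k → S → F)
    (P : Finset (Fin k)) (c : Fin k → F) : Prop :=
  ∀ z ∈ A, ∃ i ∈ P, g i z = c i

/-- A sample over `A` is minimal if dropping any index `j ∈ P` breaks the covering. -/
def IsMinimalSampleOn {S F : Type*} {k : ℕ} (A : Set S) (g : Fin k → S → F)
    (P : Finset (Fin k)) (c : Fin k → F) : Prop :=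
  IsSampleOn A g P c ∧ ∀ j ∈ P, ∃ z ∈ A, ∀ i ∈ P.erase j, g i z ≠ c i

/-- Every sample contains a minimal sample with the same values. -/
theorem IsSampleOn.exists_isMinimalSampleOn {S F : Type*} {k : ℕ} {A : Set S}
    {g : Fin k → S → F} {P : Finset (Fin k)} {c : Fin k → F} (h : IsSampleOn A g P c) :
    ∃ Q ⊆ P, IsMinimalSampleOn A g Q c := by
  obtain ⟨Q, hQP, hQ⟩ := exists_minimal_le_of_wellFoundedLT (fun Q => IsSampleOn A g Q c) P h
  refine ⟨Q, hQP, hQ.prop, fun j hj => ?_⟩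
  by_contra! hcover
  exact Finset.notMem_erase j Q (hQ.le_of_le hcover (Finset.erase_subset j Q) hj)

theorem stmt_6 {S F B : Type*} [Fintype S] [Fintype F] [Fintype B]
    {k l : ℕ} (hk : 1 ≤ k) (hl : 1 ≤ l) (b : B)
    (u : Fin l → B → F) (v : Fin l → S → F)
    (g : Fin k → S → F) (w : Fin k → F) :
    (∀ z : S, (∀ j : Fin l, v j z = u j b) → ∃ i : Fin k, g i z = w i) ↔
      ∃ (P : Finset (Fin k)) (c : Fin k → F),
        IsMinimalSampleOn {z : S | ∀ j : Fin l, v j z = u j b} g P c ∧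
          ∀ i ∈ P, w i = c i := by
  constructor
  · intro h
    have hsample : IsSampleOn {z : S | ∀ j : Fin l, v j z = u j b} g Finset.univ w :=
      fun z hz => by simpa using h z hz
    obtain ⟨P, -, hP⟩ := hsample.exists_isMinimalSampleOn
    exact ⟨P, w, hP, fun _ _ => rfl⟩
  · rintro ⟨P, c, hP, hwc⟩ z hz
    obtain ⟨i, hi, hgi⟩ := hP.1 z hz
    exact ⟨i, hgi.trans (hwc i hi).symm⟩
end
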